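/- Hausdorff–Young–Paley inequality on ℝⁿ: Let 1 < p ≤ b ≤ p' < ∞ (where 1/p + 1/p' = 1) and let φ : ℝⁿ → (0,∞) be measurable with M_φ := sup_{s>0} s · |{ξ : φ(ξ) ≥ s}| < ∞. Then for all f ∈ L^p(ℝⁿ), ( ∫_{ℝⁿ} ( |f̂(ξ)| φ(ξ)^{1/b − 1/p'} )^b dξ )^{1/b} ≲ M_φ^{1/b − 1/p'} ‖f‖_{L^p(ℝⁿ)}. -/

import Mathlib

open MeasureTheory Set SchwartzMap
open scoped ENNReal FourierTransform

theorem lintegral_Ioi_le_of_le_rpow {h : ℝ → ℝ} {A B c r s : ℝ} (hA : 0 ≤ A) (hB : 0 ≤ B)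
    (hc : 0 < c) (hr : -1 < r) (hs : s < -1) (h₁ : ∀ t, 0 < t → t ≤ c → h t ≤ A * t ^ r)
    (h₂ : ∀ t, c < t → h t ≤ B * t ^ s) :
    ∫⁻ t in Ioi 0, ENNReal.ofReal (h t) ≤
      ENNReal.ofReal (A * (c ^ (r + 1) / (r + 1)) + B * (-c ^ (s + 1) / (s + 1))) := by
  have hI : IntegrableOn (fun t : ℝ ↦ t ^ r) (Ioc 0 c) :=
    (intervalIntegrable_iff_integrableOn_Ioc_of_le hc.le).1
      (intervalIntegral.intervalIntegrable_rpow' hr)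
  have hJ : IntegrableOn (fun t : ℝ ↦ t ^ s) (Ioi c) := integrableOn_Ioi_rpow_of_lt hs hc
  have hI' : ∫ t in Ioc 0 c, t ^ r = c ^ (r + 1) / (r + 1) := by
    rw [← intervalIntegral.integral_of_le hc.le, integral_rpow (Or.inl hr),
      Real.zero_rpow (by linarith), sub_zero]
  have hJ' := integral_Ioi_rpow_of_lt hs hc
  rw [← Ioc_union_Ioi_eq_Ioi hc.le, lintegral_union measurableSet_Ioi
    (Set.disjoint_left.2 fun x hx hx' ↦ (not_lt.2 hx.2) hx'),
    ENNReal.ofReal_add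
      (mul_nonneg hA (div_nonneg (Real.rpow_nonneg hc.le _) (by linarith)))
      (mul_nonneg hB (div_nonneg_of_nonpos (neg_nonpos.2 (Real.rpow_nonneg hc.le _))
        (by linarith)))]
  refine add_le_add ?_ ?_
  · rw [← hI', ← integral_const_mul, ofReal_integral_eq_lintegral_ofReal (hI.const_mul A)]
    · exact setLIntegral_mono_ae' measurableSet_Ioc
        (ae_of_all _ fun t ht ↦ ENNReal.ofReal_le_ofReal (h₁ t ht.1 ht.2))
    · exact (ae_restrict_iff' measurableSet_Ioc).2
        (ae_of_all _ fun t ht ↦ mul_nonneg hA (Real.rpow_nonneg ht.1.le _))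
  · rw [← hJ', ← integral_const_mul, ofReal_integral_eq_lintegral_ofReal (hJ.const_mul B)]
    · exact setLIntegral_mono_ae' measurableSet_Ioi
        (ae_of_all _ fun t ht ↦ ENNReal.ofReal_le_ofReal (h₂ t ht))
    · exact (ae_restrict_iff' measurableSet_Ioi).2
        (ae_of_all _ fun t ht ↦ mul_nonneg hB (Real.rpow_nonneg (hc.trans ht).le _))

theorem lintegral_rpow_mul_high_le {p a : ℝ} (hp : 1 < p) (hp2 : p < 2) (ha : 0 ≤ a) :
    ∫⁻ t in Ioi 0, ENNReal.ofReal (t ^ (p - 2) * (a ^ 3 / (t ^ 2 + a ^ 2))) ≤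
      ENNReal.ofReal ((1 / (p - 1) + 1 / (3 - p)) * a ^ p) := by
  rcases ha.eq_or_lt with rfl | ha
  · simp
  refine (lintegral_Ioi_le_of_le_rpow (A := a) (B := a ^ 3) (c := a) (r := p - 2) (s := p - 4)
    ha.le (by positivity) ha (by linarith) (by linarith) ?_ ?_).trans_eq ?_
  · intro t ht _
    rw [mul_comm]
    gcongr
    rw [div_le_iff₀ (by positivity)]
    nlinarith [mul_pos ha (pow_pos ht 2)]
  · intro t hat
    have ht : 0 < t := ha.trans hat
    have : t ^ (p - 2) = t ^ (p - 4) * t ^ 2 := by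
      rw [← Real.rpow_natCast t 2, ← Real.rpow_add ht]; norm_num; ring_nf
    rw [this, mul_assoc, mul_comm]
    gcongr
    rw [mul_div_assoc', div_le_iff₀ (by positivity)]
    nlinarith [mul_pos (pow_pos ha 3) (pow_pos ha 2)]
  · congr 1
    have h₁ : a ^ (p - 2 + 1) = a ^ p / a := by
      rw [show p - 2 + 1 = p - 1 by ring, Real.rpow_sub_one ha.ne']
    have h₂ : a ^ (p - 4 + 1) = a ^ p / a ^ 3 := by
      rw [show p - 4 + 1 = p - (3 : ℕ) by norm_num; ring, Real.rpow_sub_natCast ha.ne']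
    rw [h₁, h₂]
    have : p - 1 ≠ 0 := by linarith
    have : 3 - p ≠ 0 := by linarith
    have : p - 4 + 1 ≠ 0 := by linarith
    have : p - 2 + 1 ≠ 0 := by linarith
    field_simp
    ring

theorem lintegral_rpow_mul_low_sq_le {p a : ℝ} (hp : 1 < p) (hp2 : p < 2) (ha : 0 ≤ a) :
    ∫⁻ t in Ioi 0, ENNReal.ofReal (t ^ (p - 3) * (a * t ^ 2 / (t ^ 2 + a ^ 2)) ^ 2) ≤
      ENNReal.ofReal ((1 / p + 1 / (2 - p)) * a ^ p) := by
  rcases ha.eq_or_lt with rfl | ha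
  · simp
  refine (lintegral_Ioi_le_of_le_rpow (A := 1) (B := a ^ 2) (c := a) (r := p - 1) (s := p - 3)
    zero_le_one (by positivity) ha (by linarith) (by linarith) ?_ ?_).trans_eq ?_
  · intro t ht _
    have : t ^ (p - 1) = t ^ (p - 3) * t ^ 2 := by
      rw [← Real.rpow_natCast t 2, ← Real.rpow_add ht]; norm_num; ring_nf
    rw [this, one_mul]
    gcongr
    rw [div_le_iff₀ (by positivity)]
    nlinarith [mul_nonneg ht.le (sq_nonneg (t - a)), mul_pos ht (mul_pos ht ha),
      mul_pos ha (mul_pos ht ha)]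
  · intro t hat
    have ht : 0 < t := ha.trans hat
    rw [mul_comm]
    gcongr
    rw [div_le_iff₀ (by positivity)]
    nlinarith [pow_pos ha 3]
  · congr 1
    have h₂ : a ^ (p - 3 + 1) = a ^ p / a ^ 2 := by
      rw [show p - 3 + 1 = p - (2 : ℕ) by norm_num; ring, Real.rpow_sub_natCast ha.ne']
    rw [h₂, sub_add_cancel]
    have : p ≠ 0 := by linarith
    have : 2 - p ≠ 0 := by linarith
    have : p - 3 + 1 ≠ 0 := by linarith
    field_simp
    ring

/-- If `φ` has weak `L¹` constant at most `1`, then the measure `φ² dμ` gives mass at most `2B` to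
the sublevel set `{φ < B}`. -/
theorem lintegral_sq_sublevel_le {α : Type*} [MeasurableSpace α] {μ : Measure α} {φ : α → ℝ}
    (hφ : Measurable φ) (hφ0 : ∀ x, 0 ≤ φ x)
    (hM : ∀ s : ℝ, 0 < s → ENNReal.ofReal s * μ {x | s ≤ φ x} ≤ 1) (B : ℝ) :
    ∫⁻ x in {x | φ x < B}, ENNReal.ofReal (φ x ^ 2) ∂μ ≤ 2 * ENNReal.ofReal B := by
  have hS : MeasurableSet {x | φ x < B} := measurableSet_lt hφ measurable_const
  have h := lintegral_rpow_eq_lintegral_meas_lt_mul (μ.restrict {x | φ x < B})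
    (f := φ) (ae_of_all _ hφ0) hφ.aemeasurable (p := 2) two_pos
  simp only [Real.rpow_two] at h
  rw [h, ENNReal.ofReal_ofNat]
  gcongr
  calc _ ≤ ∫⁻ t in Ioi (0 : ℝ), (Iio B).indicator 1 t := by
        refine setLIntegral_mono' measurableSet_Ioi fun t ht ↦ ?_
        rw [Measure.restrict_apply (measurableSet_lt measurable_const hφ)]
        by_cases htB : t < B
        · rw [indicator_of_mem (by exact htB), mul_comm, show (2 : ℝ) - 1 = 1 by norm_num,
            Real.rpow_one]
          exact (mul_le_mul_right (measure_mono fun x hx ↦ le_of_lt (show t < φ x from hx.1)) _).trans (hM t ht)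
        · have : {x | t < φ x} ∩ {x | φ x < B} = ∅ := by
            ext x
            simp only [mem_inter_iff, mem_ofPred_eq, mem_empty_iff_false, iff_false, not_and, not_lt]
            intro hx
            linarith
          simp [this]
    _ = ENNReal.ofReal B := by
        rw [lintegral_indicator_one measurableSet_Iio, Measure.restrict_apply measurableSet_Iio,
          inter_comm, Ioi_inter_Iio, Real.volume_Ioo, sub_zero]

section Schwartz

variable {V : Type*} [NormedAddCommGroup V] [InnerProductSpace ℝ V]

/-- Smooth truncation: a Schwartz function `f` splits as `(f - f₂) + f₂`, where `f₂` is small where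
`‖f‖` is large compared with `t` and `f - f₂` is small where `‖f‖` is small compared with `t`. -/
theorem SchwartzMap.exists_smooth_truncation (f : 𝓢(V, ℂ)) {t : ℝ} (ht : 0 < t) :
    ∃ f₁ f₂ : 𝓢(V, ℂ), f = f₁ + f₂ ∧
      (∀ x, ‖f₁ x‖ = ‖f x‖ ^ 3 / (t ^ 2 + ‖f x‖ ^ 2)) ∧
      ∀ x, ‖f₂ x‖ = ‖f x‖ * t ^ 2 / (t ^ 2 + ‖f x‖ ^ 2) := by
  have hg : (fun x : V ↦ (1 + ‖(t⁻¹ • f) x‖ ^ 2) ^ (-1 : ℝ)).HasTemperateGrowth :=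
    (Function.hasTemperateGrowth_one_add_norm_sq_rpow (H := ℂ) (-1)).comp
      (t⁻¹ • f).hasTemperateGrowth
  have hval : ∀ x, smulLeftCLM ℂ (fun x : V ↦ (1 + ‖(t⁻¹ • f) x‖ ^ 2) ^ (-1 : ℝ)) f x =
      (t ^ 2 / (t ^ 2 + ‖f x‖ ^ 2)) • f x := by
    intro x
    rw [smulLeftCLM_apply_apply hg, Real.rpow_neg_one, smul_apply, norm_smul, norm_inv,
      Real.norm_of_nonneg ht.le]
    congr 1
    field_simp
  refine ⟨f - smulLeftCLM ℂ (fun x : V ↦ (1 + ‖(t⁻¹ • f) x‖ ^ 2) ^ (-1 : ℝ)) f,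
    smulLeftCLM ℂ (fun x : V ↦ (1 + ‖(t⁻¹ • f) x‖ ^ 2) ^ (-1 : ℝ)) f,
    (sub_add_cancel _ _).symm, fun x ↦ ?_, fun x ↦ ?_⟩
  · have h0 : t ^ 2 + ‖f x‖ ^ 2 ≠ 0 := by positivity
    have : f x - (t ^ 2 / (t ^ 2 + ‖f x‖ ^ 2)) • f x =
        (‖f x‖ ^ 2 / (t ^ 2 + ‖f x‖ ^ 2)) • f x := by
      rw [← one_smul ℝ (f x), smul_smul, ← sub_smul, smul_smul, one_smul]
      congr 1
      field_simp
      ring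
    rw [sub_apply, hval, this, norm_smul, Real.norm_of_nonneg (by positivity)]
    ring
  · rw [hval, norm_smul, Real.norm_of_nonneg (by positivity)]
    ring

variable [FiniteDimensional ℝ V] [MeasurableSpace V] [BorelSpace V]

theorem SchwartzMap.ofReal_norm_fourier_le_lintegral (f : 𝓢(V, ℂ)) (ξ : V) :
    ENNReal.ofReal ‖𝓕 f ξ‖ ≤ ∫⁻ x, ENNReal.ofReal ‖f x‖ := by
  rw [← ofReal_integral_eq_lintegral_ofReal f.integrable.norm (ae_of_all _ fun _ ↦ norm_nonneg _),
    ← norm_toLp_one]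
  exact ENNReal.ofReal_le_ofReal (norm_fourier_apply_le_toLp_one f ξ)

theorem SchwartzMap.lintegral_norm_sq_fourier (f : 𝓢(V, ℂ)) :
    ∫⁻ ξ, ENNReal.ofReal (‖𝓕 f ξ‖ ^ 2) = ∫⁻ x, ENNReal.ofReal (‖f x‖ ^ 2) := by
  have h : ∀ g : 𝓢(V, ℂ), ∫⁻ x, ENNReal.ofReal (‖g x‖ ^ 2) =
      ENNReal.ofReal (∫ x, ‖g x‖ ^ 2) := fun g ↦
    (ofReal_integral_eq_lintegral_ofReal
      ((g.memLp 2).integrable_norm_pow two_ne_zero) (ae_of_all _ fun _ ↦ by positivity)).symm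
  rw [h, h, integral_norm_sq_fourier]

/-- The distribution function of `‖𝓕 f‖ / φ` with respect to the measure `φ² dξ`, estimated through
the weak `(1, 1)` and `(2, 2)` bounds applied to the truncation of `f` at height `t`. -/
theorem SchwartzMap.withDensity_norm_fourier_div_le (f : 𝓢(V, ℂ)) {φ : V → ℝ} (hφ : Measurable φ)
    (hφ0 : ∀ x, 0 ≤ φ x)
    (hM : ∀ s : ℝ, 0 < s → ENNReal.ofReal s * volume {x | s ≤ φ x} ≤ 1) {t : ℝ} (ht : 0 < t) :
    (volume.withDensity fun ξ ↦ ENNReal.ofReal (φ ξ ^ 2)) {ξ | t < ‖𝓕 f ξ‖ / φ ξ} ≤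
      ENNReal.ofReal (4 / t) *
        (∫⁻ x, ENNReal.ofReal (‖f x‖ ^ 3 / (t ^ 2 + ‖f x‖ ^ 2))) +
      ENNReal.ofReal (4 / t ^ 2) *
        ∫⁻ x, ENNReal.ofReal ((‖f x‖ * t ^ 2 / (t ^ 2 + ‖f x‖ ^ 2)) ^ 2) := by
  obtain ⟨f₁, f₂, hf, h₁, h₂⟩ := f.exists_smooth_truncation ht
  simp_rw [← h₁, ← h₂]
  have hsub : {ξ | t < ‖𝓕 f ξ‖ / φ ξ} ⊆
      {ξ | 0 < φ ξ ∧ t * φ ξ < 2 * ‖𝓕 f₁ ξ‖} ∪ {ξ | t * φ ξ ≤ 2 * ‖𝓕 f₂ ξ‖} := by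
    intro ξ hξ
    rw [mem_ofPred_eq] at hξ
    have hpos : 0 < φ ξ := by
      refine (hφ0 ξ).lt_of_ne fun h ↦ ?_
      rw [← h, div_zero] at hξ
      exact hξ.not_gt ht
    rw [lt_div_iff₀ hpos, hf, FourierTransform.fourier_add, add_apply] at hξ
    rcases lt_or_ge (t * φ ξ) (2 * ‖𝓕 f₁ ξ‖) with h | h
    · exact Or.inl ⟨hpos, h⟩
    · right
      have := norm_add_le (𝓕 f₁ ξ) (𝓕 f₂ ξ)
      rw [mem_ofPred_eq]
      linarith
  refine (measure_mono hsub).trans ((measure_union_le _ _).trans (add_le_add ?_ ?_))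
  · set A : ℝ≥0∞ := ∫⁻ x, ENNReal.ofReal ‖f₁ x‖ with hA
    have hAtop : A ≠ ⊤ := by
      rw [hA, ← ofReal_integral_eq_lintegral_ofReal f₁.integrable.norm
        (ae_of_all _ fun _ ↦ norm_nonneg _)]
      exact ENNReal.ofReal_ne_top
    have hsub' : {ξ | 0 < φ ξ ∧ t * φ ξ < 2 * ‖𝓕 f₁ ξ‖} ⊆ {ξ | φ ξ < 2 * A.toReal / t} := by
      rintro ξ ⟨-, h⟩
      have := (ENNReal.ofReal_le_iff_le_toReal hAtop).1 (f₁.ofReal_norm_fourier_le_lintegral ξ)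
      rw [mem_ofPred_eq, lt_div_iff₀ ht]
      linarith
    refine (measure_mono hsub').trans ?_
    rw [withDensity_apply _ (measurableSet_lt hφ measurable_const)]
    refine (lintegral_sq_sublevel_le hφ hφ0 hM _).trans_eq ?_
    rw [← ENNReal.ofReal_ofNat 2, ← ENNReal.ofReal_mul zero_le_two]
    conv_rhs => rw [← ENNReal.ofReal_toReal hAtop]
    rw [← ENNReal.ofReal_mul (by positivity)]
    congr 1
    ring
  · have hm : MeasurableSet {ξ | t * φ ξ ≤ 2 * ‖𝓕 f₂ ξ‖} :=
      measurableSet_le (hφ.const_mul t) ((𝓕 f₂).continuous.measurable.norm.const_mul 2)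
    rw [withDensity_apply _ hm, ← f₂.lintegral_norm_sq_fourier,
      ← lintegral_const_mul' _ _ ENNReal.ofReal_ne_top]
    refine (setLIntegral_mono' hm fun ξ hξ ↦ ?_).trans (setLIntegral_le_lintegral _ _)
    rw [← ENNReal.ofReal_mul (by positivity)]
    refine ENNReal.ofReal_le_ofReal ?_
    rw [mem_ofPred_eq] at hξ
    have := pow_le_pow_left₀ (mul_nonneg ht.le (hφ0 ξ)) hξ 2
    rw [div_mul_eq_mul_div, le_div_iff₀ (by positivity)]
    linarith

/-- Paley's inequality for Schwartz functions, with a normalized weight. -/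
theorem SchwartzMap.paley_inequality_of_weak_le_one {p : ℝ} (hp : 1 < p) (hp2 : p < 2) :
    ∃ K : ℝ, 0 < K ∧ ∀ f : 𝓢(V, ℂ), ∀ φ : V → ℝ, Measurable φ → (∀ x, 0 ≤ φ x) →
      (∀ s : ℝ, 0 < s → ENNReal.ofReal s * volume {x | s ≤ φ x} ≤ 1) →
      ∫⁻ ξ, ENNReal.ofReal (‖𝓕 f ξ‖ ^ p * φ ξ ^ (2 - p)) ≤
        ENNReal.ofReal K * ∫⁻ x, ENNReal.ofReal (‖f x‖ ^ p) := by
  set C₁ : ℝ := 1 / (p - 1) + 1 / (3 - p)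
  set C₂ : ℝ := 1 / p + 1 / (2 - p)
  have hC₁ : 0 < C₁ :=
    add_pos (one_div_pos.2 (by linarith)) (one_div_pos.2 (by linarith))
  have hC₂ : 0 < C₂ :=
    add_pos (one_div_pos.2 (by linarith)) (one_div_pos.2 (by linarith))
  have hp0 : 0 < p := by linarith
  refine ⟨p * (4 * C₁ + 4 * C₂), by positivity, fun f φ hφ hφ0 hM ↦ ?_⟩
  have hmf : Measurable fun x ↦ ‖f x‖ := f.continuous.measurable.norm
  have hmu : Measurable fun ξ ↦ ‖𝓕 f ξ‖ / φ ξ := (𝓕 f).continuous.measurable.norm.div hφ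
  have hu : ∀ ξ, 0 ≤ ‖𝓕 f ξ‖ / φ ξ := fun ξ ↦ div_nonneg (norm_nonneg _) (hφ0 ξ)
  have hhigh : ∫⁻ t in Ioi 0, ENNReal.ofReal (t ^ (p - 2)) *
      ∫⁻ x, ENNReal.ofReal (‖f x‖ ^ 3 / (t ^ 2 + ‖f x‖ ^ 2)) ≤
      ENNReal.ofReal C₁ * ∫⁻ x, ENNReal.ofReal (‖f x‖ ^ p) := by
    simp_rw [← lintegral_const_mul' _ _ ENNReal.ofReal_ne_top]
    rw [lintegral_lintegral_swap (by unfold Function.uncurry; fun_prop)]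
    refine lintegral_mono fun x ↦ ?_
    rw [← ENNReal.ofReal_mul hC₁.le]
    refine le_of_eq_of_le ?_ (lintegral_rpow_mul_high_le hp hp2 (norm_nonneg (f x)))
    refine setLIntegral_congr_fun measurableSet_Ioi fun t ht ↦ ?_
    exact (ENNReal.ofReal_mul (Real.rpow_nonneg (le_of_lt ht) _)).symm
  have hlow : ∫⁻ t in Ioi 0, ENNReal.ofReal (t ^ (p - 3)) *
      ∫⁻ x, ENNReal.ofReal ((‖f x‖ * t ^ 2 / (t ^ 2 + ‖f x‖ ^ 2)) ^ 2) ≤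
      ENNReal.ofReal C₂ * ∫⁻ x, ENNReal.ofReal (‖f x‖ ^ p) := by
    simp_rw [← lintegral_const_mul' _ _ ENNReal.ofReal_ne_top]
    rw [lintegral_lintegral_swap (by unfold Function.uncurry; fun_prop)]
    refine lintegral_mono fun x ↦ ?_
    rw [← ENNReal.ofReal_mul hC₂.le]
    refine le_of_eq_of_le ?_ (lintegral_rpow_mul_low_sq_le hp hp2 (norm_nonneg (f x)))
    refine setLIntegral_congr_fun measurableSet_Ioi fun t ht ↦ ?_
    exact (ENNReal.ofReal_mul (Real.rpow_nonneg (le_of_lt ht) _)).symm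
  have hLHS : ∫⁻ ξ, ENNReal.ofReal (‖𝓕 f ξ‖ ^ p * φ ξ ^ (2 - p)) =
      ∫⁻ ξ, ENNReal.ofReal ((‖𝓕 f ξ‖ / φ ξ) ^ p)
        ∂(volume.withDensity fun ξ ↦ ENNReal.ofReal (φ ξ ^ 2)) := by
    rw [lintegral_withDensity_eq_lintegral_mul _ (by fun_prop) (by fun_prop)]
    refine lintegral_congr fun ξ ↦ ?_
    rw [Pi.mul_apply, ← ENNReal.ofReal_mul (by positivity)]
    congr 1
    rcases (hφ0 ξ).eq_or_lt with h | h
    · rw [← h, Real.zero_rpow (by linarith)]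
      simp
    · rw [Real.div_rpow (norm_nonneg _) h.le, Real.rpow_sub h, Real.rpow_two]
      ring
  rw [hLHS, lintegral_rpow_eq_lintegral_meas_lt_mul _ (ae_of_all _ hu) hmu.aemeasurable hp0,
    ENNReal.ofReal_mul hp0.le, mul_assoc]
  gcongr
  calc _ ≤ ∫⁻ t in Ioi 0, (4 * (ENNReal.ofReal (t ^ (p - 2)) *
          ∫⁻ x, ENNReal.ofReal (‖f x‖ ^ 3 / (t ^ 2 + ‖f x‖ ^ 2))) +
        4 * (ENNReal.ofReal (t ^ (p - 3)) *
          ∫⁻ x, ENNReal.ofReal ((‖f x‖ * t ^ 2 / (t ^ 2 + ‖f x‖ ^ 2)) ^ 2))) := by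
        refine setLIntegral_mono' measurableSet_Ioi fun t ht ↦ ?_
        rw [mem_Ioi] at ht
        refine (mul_le_mul_left (f.withDensity_norm_fourier_div_le hφ hφ0 hM ht) _).trans_eq ?_
        have e₁ : ENNReal.ofReal (4 / t) * ENNReal.ofReal (t ^ (p - 1)) =
            4 * ENNReal.ofReal (t ^ (p - 2)) := by
          rw [← ENNReal.ofReal_ofNat 4, ← ENNReal.ofReal_mul (by positivity),
            ← ENNReal.ofReal_mul (by positivity), show p - 1 = p - 2 + 1 by ring,
            Real.rpow_add_one ht.ne']
          congr 1
          field_simp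
        have e₂ : ENNReal.ofReal (4 / t ^ 2) * ENNReal.ofReal (t ^ (p - 1)) =
            4 * ENNReal.ofReal (t ^ (p - 3)) := by
          rw [← ENNReal.ofReal_ofNat 4, ← ENNReal.ofReal_mul (by positivity),
            ← ENNReal.ofReal_mul (by positivity), show p - 1 = p - 3 + (2 : ℕ) by norm_num; ring,
            Real.rpow_add_natCast ht.ne']
          congr 1
          field_simp
        rw [add_mul, mul_right_comm, e₁, mul_right_comm (ENNReal.ofReal (4 / t ^ 2)), e₂,
          mul_assoc, mul_assoc]
    _ ≤ 4 * (ENNReal.ofReal C₁ * ∫⁻ x, ENNReal.ofReal (‖f x‖ ^ p)) +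
        4 * (ENNReal.ofReal C₂ * ∫⁻ x, ENNReal.ofReal (‖f x‖ ^ p)) := by
        rw [lintegral_add_left, lintegral_const_mul' _ _ (by norm_num),
          lintegral_const_mul' _ _ (by norm_num)]
        · gcongr
        · refine Measurable.const_mul (Measurable.mul (by fun_prop) ?_) _
          exact Measurable.lintegral_prod_right (by unfold Function.uncurry; fun_prop)
    _ = _ := by
        rw [ENNReal.ofReal_add (p := 4 * C₁) (by positivity) (by positivity), ENNReal.ofReal_mul (by norm_num),
          ENNReal.ofReal_mul (by norm_num), ENNReal.ofReal_ofNat]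
        ring

/-- Paley's inequality for Schwartz functions. -/
theorem SchwartzMap.paley_inequality {p : ℝ} (hp : 1 < p) (hp2 : p < 2) :
    ∃ K : ℝ, 0 < K ∧ ∀ f : 𝓢(V, ℂ), ∀ φ : V → ℝ, Measurable φ → (∀ x, 0 ≤ φ x) →
      ∀ M : ℝ, 0 < M →
      (∀ s : ℝ, 0 < s → ENNReal.ofReal s * volume {x | s ≤ φ x} ≤ ENNReal.ofReal M) →
      ∫⁻ ξ, ENNReal.ofReal (‖𝓕 f ξ‖ ^ p * φ ξ ^ (2 - p)) ≤
        ENNReal.ofReal (K * M ^ (2 - p)) * ∫⁻ x, ENNReal.ofReal (‖f x‖ ^ p) := by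
  obtain ⟨K, hK, h⟩ := paley_inequality_of_weak_le_one (V := V) hp hp2
  refine ⟨K, hK, fun f φ hφ hφ0 M hM hweak ↦ ?_⟩
  have h1 := h f (fun x ↦ φ x / M) (hφ.div_const M) (fun x ↦ div_nonneg (hφ0 x) hM.le) ?_
  · have e : ∀ ξ, ENNReal.ofReal (‖𝓕 f ξ‖ ^ p * φ ξ ^ (2 - p)) =
        ENNReal.ofReal (M ^ (2 - p)) *
          ENNReal.ofReal (‖𝓕 f ξ‖ ^ p * (φ ξ / M) ^ (2 - p)) := by
      intro ξ
      rw [← ENNReal.ofReal_mul (by positivity), Real.div_rpow (hφ0 ξ) hM.le]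
      congr 1
      field_simp
    simp_rw [e]
    rw [lintegral_const_mul' _ _ ENNReal.ofReal_ne_top, mul_comm K,
      ENNReal.ofReal_mul (by positivity), mul_assoc]
    gcongr
  · intro s hs
    have h2 := hweak (s * M) (by positivity)
    simp_rw [le_div_iff₀ hM]
    rw [ENNReal.ofReal_mul hs.le, mul_right_comm] at h2
    have hM0 : ENNReal.ofReal M ≠ 0 := by simpa using hM
    rw [← ENNReal.mul_le_mul_iff_left hM0 ENNReal.ofReal_ne_top, one_mul]
    exact h2

theorem SchwartzMap.lintegral_ofReal_norm_rpow (f : 𝓢(V, ℂ)) {p : ℝ} (hp : 0 < p) :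
    ∫⁻ x, ENNReal.ofReal (‖f x‖ ^ p) =
      ENNReal.ofReal ((eLpNorm f (ENNReal.ofReal p) volume).toReal ^ p) := by
  have htop : eLpNorm f (ENNReal.ofReal p) volume ≠ ⊤ := (f.eLpNorm_lt_top (ENNReal.ofReal p) volume).ne
  rw [← ENNReal.ofReal_rpow_of_nonneg ENNReal.toReal_nonneg hp.le, ENNReal.ofReal_toReal htop,
    eLpNorm_eq_lintegral_rpow_enorm_toReal (by simpa using hp) ENNReal.ofReal_ne_top,
    ENNReal.toReal_ofReal hp.le, ← ENNReal.rpow_mul, one_div_mul_cancel hp.ne', ENNReal.rpow_one]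
  refine lintegral_congr fun x ↦ ?_
  rw [← ENNReal.ofReal_rpow_of_nonneg (norm_nonneg _) hp.le, ofReal_norm]

/-- The Hausdorff–Young inequality for Schwartz functions, up to a constant: apply Paley's
inequality to the weight `‖𝓕 f‖ ^ q`. -/
theorem SchwartzMap.hausdorff_young {p q : ℝ} (hp : 1 < p) (hp2 : p < 2) (hpq : 1 / p + 1 / q = 1) :
    ∃ K : ℝ, 0 < K ∧ ∀ f : 𝓢(V, ℂ), ∫⁻ ξ, ENNReal.ofReal (‖𝓕 f ξ‖ ^ q) ≤
      ENNReal.ofReal (K * (eLpNorm f (ENNReal.ofReal p) volume).toReal ^ q) := by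
  obtain ⟨K, hK, h⟩ := paley_inequality (V := V) hp hp2
  have hp0 : 0 < p := by linarith
  have hq : q = p / (p - 1) := by
    have hq0 : q ≠ 0 := by rintro rfl; simp at hpq; linarith
    have : p - 1 ≠ 0 := by linarith
    field_simp at hpq ⊢
    linarith
  have hq0 : 0 < q := hq ▸ div_pos hp0 (by linarith)
  have hexp : p + q * (2 - p) = q := by
    have : p - 1 ≠ 0 := by linarith
    rw [hq]; field_simp; ring
  refine ⟨K ^ (1 / (p - 1)), by positivity, fun f ↦ ?_⟩
  set N := (eLpNorm f (ENNReal.ofReal p) volume).toReal with hN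
  have hN0 : 0 ≤ N := ENNReal.toReal_nonneg
  have hI := (𝓕 f).lintegral_ofReal_norm_rpow hq0
  set I := (eLpNorm (𝓕 f : 𝓢(V, ℂ)) (ENNReal.ofReal q) volume).toReal ^ q
  rw [hI]
  refine ENNReal.ofReal_le_ofReal ?_
  rcases le_or_gt I 0 with h0 | hIpos
  · exact h0.trans (by positivity)
  have h1 := h f (fun ξ : V ↦ ‖𝓕 f ξ‖ ^ q) (by have := (𝓕 f).continuous.measurable; fun_prop)
    (fun ξ ↦ by positivity) I hIpos ?_
  · rw [f.lintegral_ofReal_norm_rpow hp0, ← hN, ← ENNReal.ofReal_mul (by positivity)] at h1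
    have e : ∀ ξ : V, ‖𝓕 f ξ‖ ^ p * (‖𝓕 f ξ‖ ^ q) ^ (2 - p) = ‖𝓕 f ξ‖ ^ q := by
      intro ξ
      rw [← Real.rpow_mul (norm_nonneg _), ← Real.rpow_add_of_nonneg (norm_nonneg _) hp0.le
        (mul_nonneg hq0.le (by linarith)), hexp]
    simp_rw [e] at h1
    rw [hI, ENNReal.ofReal_le_ofReal_iff (by positivity)] at h1
    have h2 : I ^ (p - 1) ≤ K * N ^ p := by
      rw [show p - 1 = 1 - (2 - p) by ring, Real.rpow_sub hIpos, Real.rpow_one,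
        div_le_iff₀ (by positivity)]
      linarith
    have h3 := Real.rpow_le_rpow (by positivity) h2 (z := 1 / (p - 1))
      (one_div_nonneg.2 (by linarith))
    rwa [← Real.rpow_mul hIpos.le, mul_one_div_cancel (by linarith), Real.rpow_one,
      Real.mul_rpow hK.le (by positivity), ← Real.rpow_mul hN0, mul_one_div, ← hq] at h3
  · intro s hs
    rw [← hI]
    refine le_trans (mul_le_mul_right (measure_mono fun ξ hξ ↦ ?_) _)
      (mul_meas_ge_le_lintegral ?_ _)
    · exact ENNReal.ofReal_le_ofReal hξ
    · have := (𝓕 f).continuous.measurable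
      fun_prop

/-- The Hausdorff–Young–Paley inequality for Schwartz functions with a weight of positive weak
`L¹` constant `M`, in integrated form. -/
theorem SchwartzMap.hausdorff_young_paley {p q b : ℝ} (hp : 1 < p) (hp2 : p < 2)
    (hpq : 1 / p + 1 / q = 1) (hpb : p ≤ b) (hbq : b ≤ q) :
    ∃ K : ℝ, 0 < K ∧ ∀ f : 𝓢(V, ℂ), ∀ φ : V → ℝ, Measurable φ → (∀ x, 0 < φ x) →
      ∀ M : ℝ, 0 < M →
      (∀ s : ℝ, 0 < s → ENNReal.ofReal s * volume {x | s ≤ φ x} ≤ ENNReal.ofReal M) →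
      ∫⁻ ξ, ENNReal.ofReal ((‖𝓕 f ξ‖ * φ ξ ^ (1 / b - 1 / q)) ^ b) ≤
        ENNReal.ofReal ((K * M ^ (1 / b - 1 / q) *
          (eLpNorm f (ENNReal.ofReal p) volume).toReal) ^ b) := by
  obtain ⟨K₁, hK₁, h₁⟩ := paley_inequality (V := V) hp hp2
  obtain ⟨K₂, hK₂, h₂⟩ := hausdorff_young (V := V) hp hp2 hpq
  have hp0 : 0 < p := by linarith
  have hb0 : 0 < b := by linarith
  have hq0 : 0 < q := by linarith
  have hmul : p + q = p * q := by field_simp at hpq; linarith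
  have hlt : p < q := by nlinarith
  have hqp : q - p ≠ 0 := by linarith
  set θ : ℝ := (b - p) / (q - p) with hθ
  have hθ0 : 0 ≤ θ := div_nonneg (by linarith) (by linarith)
  have hθ1 : 0 ≤ 1 - θ := by
    rw [sub_nonneg, hθ, div_le_one (by linarith)]
    linarith
  have hb : p * (1 - θ) + q * θ = b := by
    rw [hθ]; field_simp; ring
  have hexp : (2 - p) * (1 - θ) = (1 / b - 1 / q) * b := by
    have : 1 / q = 1 - 1 / p := by linarith
    have hw : (1 / b - 1 / q) * b = 1 - b / q := by field_simp
    have h2p : 2 - p = 1 - p / q := by rw [div_eq_mul_one_div, this]; field_simp; ring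
    have hqq : q / q = 1 := div_self hq0.ne'
    rw [hw, h2p, ← hb, add_div, mul_div_assoc, mul_comm q θ, mul_div_assoc, hqq]
    field_simp
    ring
  refine ⟨(K₁ ^ (1 - θ) * K₂ ^ θ) ^ (1 / b), by positivity, fun f φ hφ hφ0 M hM hweak ↦ ?_⟩
  have hP := h₁ f φ hφ (fun x ↦ (hφ0 x).le) M hM hweak
  have hH := h₂ f
  rw [f.lintegral_ofReal_norm_rpow hp0, ← ENNReal.ofReal_mul (by positivity)] at hP
  set N := (eLpNorm f (ENNReal.ofReal p) volume).toReal
  have hN0 : 0 ≤ N := ENNReal.toReal_nonneg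
  have hmf : Measurable fun ξ ↦ ‖𝓕 f ξ‖ := (𝓕 f).continuous.measurable.norm
  have hpow : ∀ x : ℝ, 0 ≤ x → (x ^ p) ^ (1 - θ) * (x ^ q) ^ θ = x ^ b := by
    intro x hx
    rw [← Real.rpow_mul hx, ← Real.rpow_mul hx, ← Real.rpow_add_of_nonneg hx (by positivity)
      (by positivity), hb]
  calc ∫⁻ ξ, ENNReal.ofReal ((‖𝓕 f ξ‖ * φ ξ ^ (1 / b - 1 / q)) ^ b)
      = ∫⁻ ξ, ENNReal.ofReal (‖𝓕 f ξ‖ ^ p * φ ξ ^ (2 - p)) ^ (1 - θ) *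
          ENNReal.ofReal (‖𝓕 f ξ‖ ^ q) ^ θ := by
        refine lintegral_congr fun ξ ↦ ?_
        have hφξ := (hφ0 ξ).le
        rw [ENNReal.ofReal_rpow_of_nonneg (by positivity) hθ1,
          ENNReal.ofReal_rpow_of_nonneg (by positivity) hθ0, ← ENNReal.ofReal_mul (by positivity),
          Real.mul_rpow (by positivity) (by positivity), ← hpow _ (norm_nonneg _),
          ← Real.rpow_mul hφξ, ← hexp, Real.mul_rpow (by positivity) (by positivity),
          ← Real.rpow_mul hφξ, mul_right_comm]
    _ ≤ (∫⁻ ξ, ENNReal.ofReal (‖𝓕 f ξ‖ ^ p * φ ξ ^ (2 - p))) ^ (1 - θ) *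
          (∫⁻ ξ, ENNReal.ofReal (‖𝓕 f ξ‖ ^ q)) ^ θ :=
        ENNReal.lintegral_mul_norm_pow_le (by fun_prop) (by fun_prop) hθ1 hθ0 (by ring)
    _ ≤ ENNReal.ofReal (K₁ * M ^ (2 - p) * N ^ p) ^ (1 - θ) *
          ENNReal.ofReal (K₂ * N ^ q) ^ θ := by gcongr
    _ = _ := by
        rw [ENNReal.ofReal_rpow_of_nonneg (by positivity) hθ1,
          ENNReal.ofReal_rpow_of_nonneg (by positivity) hθ0, ← ENNReal.ofReal_mul (by positivity)]
        congr 1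
        rw [Real.mul_rpow (by positivity) (by positivity), Real.mul_rpow hK₁.le (by positivity),
          Real.mul_rpow hK₂.le (by positivity), Real.mul_rpow (by positivity) hN0,
          Real.mul_rpow (by positivity) (by positivity), ← Real.rpow_mul (by positivity) (1 / b),
          one_div_mul_cancel hb0.ne', Real.rpow_one, ← hpow N hN0, ← Real.rpow_mul hM.le,
          ← Real.rpow_mul hM.le, hexp]
        ring

end Schwartz

/-- Hausdorff–Young–Paley inequality on `ℝⁿ`: let `1 < p ≤ b ≤ p' < ∞` with
`1/p + 1/p' = 1`. Then there is a constant `K` (depending only on `p, b, n`) such that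
for every measurable `φ > 0` with `M_φ = sup_{s>0} s |{ξ : φ ξ ≥ s}| < ∞` and every `f`,
`(∫ (|f̂(ξ)| φ(ξ)^{1/b - 1/p'})^b dξ)^{1/b} ≤ K · M_φ^{1/b - 1/p'} ‖f‖_{L^p}`. -/
theorem stmt_10 (n : ℕ) (p p' b : ℝ) (hp : 1 < p) (hpb : p ≤ b) (hbp' : b ≤ p')
    (hp' : 1/p + 1/p' = 1) :
    ∃ K : ℝ≥0∞, 0 < K ∧ K ≠ ⊤ ∧
      ∀ φ : EuclideanSpace ℝ (Fin n) → ℝ, Measurable φ → (∀ ξ, 0 < φ ξ) →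
        ∀ Mφ : ℝ≥0∞, Mφ ≠ ⊤ →
          (∀ s : ℝ, 0 < s →
            ENNReal.ofReal s * volume {ξ : EuclideanSpace ℝ (Fin n) | s ≤ φ ξ} ≤ Mφ) →
          ∀ f : 𝓢(EuclideanSpace ℝ (Fin n), ℂ),
            (∫⁻ ξ, ((‖𝓕 (⇑f) ξ‖₊ : ℝ≥0∞) *
                ENNReal.ofReal (φ ξ) ^ (1/b - 1/p')) ^ b) ^ (1/b) ≤
              K * Mφ ^ (1/b - 1/p') * eLpNorm (⇑f) (ENNReal.ofReal p) volume := by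
  have hp0 : 0 < p := by linarith
  have hb0 : 0 < b := by linarith
  have hq0 : 0 < p' := by linarith
  have hexp : 0 ≤ 1 / b - 1 / p' := sub_nonneg.2 (one_div_le_one_div_of_le hb0 hbp')
  have key : ∃ K : ℝ, 0 < K ∧ ∀ f : 𝓢(EuclideanSpace ℝ (Fin n), ℂ),
      ∀ φ : EuclideanSpace ℝ (Fin n) → ℝ, Measurable φ → (∀ x, 0 < φ x) → ∀ M : ℝ, 0 < M →
      (∀ s : ℝ, 0 < s → ENNReal.ofReal s * volume {x | s ≤ φ x} ≤ ENNReal.ofReal M) →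
      ∫⁻ ξ, ENNReal.ofReal ((‖𝓕 f ξ‖ * φ ξ ^ (1 / b - 1 / p')) ^ b) ≤
        ENNReal.ofReal ((K * M ^ (1 / b - 1 / p') *
          (eLpNorm f (ENNReal.ofReal p) volume).toReal) ^ b) := by
    have hmul : p + p' = p * p' := by field_simp at hp'; linarith
    have hp2 : p ≤ 2 := by nlinarith
    rcases hp2.lt_or_eq with hp2 | rfl
    · exact hausdorff_young_paley hp hp2 hp' hpb hbp'
    · obtain rfl : p' = 2 := by linarith
      obtain rfl : b = 2 := le_antisymm hbp' hpb
      refine ⟨1, one_pos, fun f φ _ _ M _ _ ↦ ?_⟩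
      have h := f.lintegral_ofReal_norm_rpow two_pos
      simp only [sub_self, Real.rpow_zero, mul_one, one_mul, Real.rpow_two] at h ⊢
      rw [f.lintegral_norm_sq_fourier, h]
  obtain ⟨K, hK, h⟩ := key
  refine ⟨ENNReal.ofReal K, by simpa using hK, ENNReal.ofReal_ne_top,
    fun φ hφ hφ0 Mφ hMφ hweak f ↦ ?_⟩
  have hM0 : Mφ ≠ 0 := by
    rintro rfl
    have hnull : ∀ k : ℕ, volume {ξ : EuclideanSpace ℝ (Fin n) | 1 / ((k : ℝ) + 1) ≤ φ ξ} = 0 := by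
      intro k
      have hk : (0 : ℝ) < 1 / ((k : ℝ) + 1) := by positivity
      exact (mul_eq_zero.1 (nonpos_iff_eq_zero.1 (hweak _ hk))).resolve_left (by simpa using hk)
    have huniv : (univ : Set (EuclideanSpace ℝ (Fin n))) =
        ⋃ k : ℕ, {ξ | 1 / ((k : ℝ) + 1) ≤ φ ξ} := by
      refine (eq_univ_of_forall fun ξ ↦ mem_iUnion.2 ?_).symm
      obtain ⟨k, hk⟩ := exists_nat_one_div_lt (hφ0 ξ)
      exact ⟨k, hk.le⟩
    have : volume (univ : Set (EuclideanSpace ℝ (Fin n))) = 0 := by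
      rw [huniv]
      exact measure_iUnion_null hnull
    exact isOpen_univ.measure_ne_zero volume univ_nonempty this
  have hM : 0 < Mφ.toReal := ENNReal.toReal_pos hM0 hMφ
  have hmain := h f φ hφ hφ0 Mφ.toReal hM (by rwa [ENNReal.ofReal_toReal hMφ])
  have hN : eLpNorm f (ENNReal.ofReal p) volume ≠ ⊤ := 
    (f.eLpNorm_lt_top (ENNReal.ofReal p) volume).ne
  rw [← ENNReal.ofReal_rpow_of_nonneg (by positivity) hb0.le,
    ENNReal.ofReal_mul (by positivity), ENNReal.ofReal_mul hK.le,
    ← ENNReal.ofReal_rpow_of_nonneg hM.le hexp, ENNReal.ofReal_toReal hMφ,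
    ENNReal.ofReal_toReal hN] at hmain
  rw [one_div b, ENNReal.rpow_inv_le_iff hb0, ← one_div]
  refine le_of_eq_of_le (lintegral_congr fun ξ ↦ ?_) hmain
  have hφξ := hφ0 ξ
  rw [← ENNReal.ofReal_rpow_of_nonneg (by positivity) hb0.le, ENNReal.ofReal_mul (norm_nonneg _),
    ← ENNReal.ofReal_rpow_of_nonneg hφξ.le hexp, ofReal_norm]
  rfl
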